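/- arXiv:2407.12596 — 2 statements merged into one kernel-verified Lean document; each statement's English description precedes it below -/
import Mathlib

section
/- Let n ≥ 4 with n ≡ 0 (mod 4), let p > 2 be a prime, and r ∈ ℕ_{≥1}. Then the number of tuples (c₁, …, cₙ) ∈ (ℤ/p^rℤ)ⁿ with [c₁, …, cₙ] = −Id equals p^{(n-3)(r-1)} · (p^{(n-2)/2} − 1) · [n/4]_{p²}, where [m]_q := (q^m − 1)/(q − 1). -/
open Matrix

/-- `η(a)` is the matrix `![![a, -1], ![1, 0]]`. -/
def eta {R : Type*} [CommRing R] (a : R) : Matrix (Fin 2) (Fin 2) R := !![a, -1; 1, 0]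

/-- `[c₁, …, cₙ] = η(c₁)·η(c₂)⋯η(cₙ)`. -/
def prodEta {R : Type*} [CommRing R] {n : ℕ} (c : Fin n → R) : Matrix (Fin 2) (Fin 2) R :=
  (List.ofFn fun i => eta (c i)).prod


/-- The q-integer `[m]_q = 1 + q + ⋯ + q^(m-1) = (q^m - 1)/(q - 1)`. -/
def qInt (m q : ℕ) : ℕ := ∑ i ∈ Finset.range m, q ^ i


theorem prodEta_succ {R : Type*} [CommRing R] {n : ℕ} (c : Fin (n+1) → R) :
    prodEta c = eta (c 0) * prodEta (fun i : Fin n => c i.succ) := by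
  simp [prodEta, List.ofFn_succ]

theorem prodEta_last {R : Type*} [CommRing R] {n : ℕ} (c : Fin (n+1) → R) :
    prodEta c = prodEta (fun i : Fin n => c i.castSucc) * eta (c (Fin.last n)) := by
  unfold prodEta
  rw [List.ofFn_succ_last]
  simp

theorem prodEta_zero {R : Type*} [CommRing R] (c : Fin 0 → R) : prodEta c = 1 := by
  simp [prodEta]

theorem prodEta_det {R : Type*} [CommRing R] : ∀ {n : ℕ} (c : Fin n → R), (prodEta c).det = 1
  | 0, c => by simp [prodEta_zero]
  | n+1, c => by
    rw [prodEta_succ, Matrix.det_mul, prodEta_det]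
    simp [eta, Matrix.det_fin_two]

theorem prodEta_map {R S : Type*} [CommRing R] [CommRing S] (f : R →+* S) :
    ∀ {n : ℕ} (c : Fin n → R), prodEta (fun i => f (c i)) = (prodEta c).map f
  | 0, c => by simp [prodEta_zero]
  | n+1, c => by
    rw [prodEta_succ, prodEta_succ, prodEta_map f (fun i : Fin n => c i.succ), Matrix.map_mul]
    congr 1
    ext i j
    fin_cases i <;> fin_cases j <;> simp [eta]

theorem prodEta_rot {R : Type*} [CommRing R] {n : ℕ} (c : Fin (n+1) → R) :
    prodEta (fun i => c (i + 1)) = -1 ↔ prodEta c = -1 := by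
  rw [prodEta_last (fun i => c (i+1)), prodEta_succ c]
  simp only [Fin.coeSucc_eq_succ, Fin.last_add_one]
  rw [← neg_eq_iff_eq_neg, ← neg_eq_iff_eq_neg, ← neg_mul, mul_eq_one_comm, mul_neg]

theorem three_expand {R : Type*} [CommRing R] (a b d e : R) (M : Matrix (Fin 2) (Fin 2) R)
    (hM : M.det = 1) :
    eta a * (eta b * (eta d * M)) = e • 1 ↔
      (b = -(e * M 0 0) ∧ a * b = 1 + e * M 0 1 ∧ b * d = 1 - e * M 1 0 ∧
        (a * b - 1) * d - a = e * M 1 1) := by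
  have h1 : eta a * (eta b * (eta d * M)) = e • 1 ↔
      eta a * (eta b * eta d) = e • M.adjugate := by
    constructor
    · intro h
      have := congrArg (· * M.adjugate) h
      simpa [mul_assoc, Matrix.mul_adjugate, hM] using this
    · intro h
      have := congrArg (· * M) h
      simpa [mul_assoc, Matrix.adjugate_mul, hM] using this
  rw [h1, Matrix.adjugate_fin_two, ← Matrix.ext_iff]
  simp only [Fin.forall_fin_two]
  simp [eta, Matrix.mul_apply, Fin.sum_univ_two]
  constructor
  · rintro ⟨⟨h1, h2⟩, h3, h4⟩
    refine ⟨?_, ?_, ?_, ?_⟩ <;> grind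
  · rintro ⟨h1, h2, h3, h4⟩
    refine ⟨⟨?_, ?_⟩, ?_, ?_⟩ <;> grind

theorem three_exists {R : Type*} [CommRing R] (e : R) (he : e * e = 1)
    (M : Matrix (Fin 2) (Fin 2) R) (hM : M.det = 1) (hu : IsUnit (M 0 0)) :
    ∃ a b d, IsUnit b ∧ eta a * (eta b * (eta d * M)) = e • 1 := by
  obtain ⟨v, hv⟩ := hu.exists_right_inv
  have hd := Matrix.det_fin_two M
  rw [hM] at hd
  refine ⟨-(e * v) * (1 + e * M 0 1), -(e * M 0 0), -(e * v) * (1 - e * M 1 0), ?_, ?_⟩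
  · exact (IsUnit.mul (IsUnit.of_mul_eq_one _ he) hu).neg
  · rw [three_expand _ _ _ _ _ hM]
    refine ⟨rfl, ?_, ?_, ?_⟩
    · linear_combination (1 + e * M 0 1) * (e * e * hv + he)
    · linear_combination (1 - e * M 1 0) * (e * e * hv + he)
    · apply hu.mul_left_cancel
      grind

theorem three_unique {R : Type*} [CommRing R] {e : R} {M : Matrix (Fin 2) (Fin 2) R}
    (hM : M.det = 1) {a b d a' b' d' : R} (hb : IsUnit b)
    (h : eta a * (eta b * (eta d * M)) = e • 1)
    (h' : eta a' * (eta b' * (eta d' * M)) = e • 1) : a = a' ∧ b = b' ∧ d = d' := by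
  rw [three_expand _ _ _ _ _ hM] at h h'
  obtain ⟨h1, h2, h3, -⟩ := h
  obtain ⟨h1', h2', h3', -⟩ := h'
  have hbb : b = b' := h1.trans h1'.symm
  subst hbb
  exact ⟨hb.mul_right_cancel (h2.trans h2'.symm), rfl, hb.mul_left_cancel (h3.trans h3'.symm)⟩

theorem prodEta_three {R : Type*} [CommRing R] {m : ℕ} (c : Fin (m+3) → R) :
    prodEta c = eta (c 0) * (eta (c 1) * (eta (c 2) *
      prodEta (fun i : Fin m => c i.succ.succ.succ))) := by
  rw [prodEta_succ, prodEta_succ, prodEta_succ]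
  rfl

/-- Build a tuple from three leading entries and a tail. -/
def cons3 {R : Type*} {m : ℕ} (a b d : R) (t : Fin m → R) : Fin (m+3) → R :=
  Fin.cons a (Fin.cons b (Fin.cons d t : Fin (m+1) → R) : Fin (m+2) → R)

theorem cons3_0 {R : Type*} {m : ℕ} (a b d : R) (t : Fin m → R) : cons3 a b d t 0 = a := rfl
theorem cons3_1 {R : Type*} {m : ℕ} (a b d : R) (t : Fin m → R) : cons3 a b d t 1 = b := rfl
theorem cons3_2 {R : Type*} {m : ℕ} (a b d : R) (t : Fin m → R) : cons3 a b d t 2 = d := rfl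
theorem cons3_s {R : Type*} {m : ℕ} (a b d : R) (t : Fin m → R) (i : Fin m) :
    cons3 a b d t i.succ.succ.succ = t i := rfl

theorem ext3 {R : Type*} {m : ℕ} {c c' : Fin (m+3) → R} (h0 : c 0 = c' 0) (h1 : c 1 = c' 1)
    (h2 : c 2 = c' 2) (h : ∀ i : Fin m, c i.succ.succ.succ = c' i.succ.succ.succ) : c = c' := by
  funext i
  refine Fin.cases h0 (fun i => ?_) i
  refine Fin.cases h1 (fun i => ?_) i
  refine Fin.cases h2 (fun i => ?_) i
  exact h i

theorem prodEta_cons3 {R : Type*} [CommRing R] {m : ℕ} (a b d : R) (t : Fin m → R) :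
    prodEta (cons3 a b d t) = eta a * (eta b * (eta d * prodEta t)) := by
  rw [prodEta_three]; rfl

/-- number of solutions of `prodEta c = e • 1`. -/
noncomputable def NN (F : Type*) [CommRing F] (n : ℕ) (e : F) : ℕ :=
  Nat.card {c : Fin n → F // prodEta c = e • 1}

/-- number of tuples with nonzero continuant. -/
noncomputable def UU (F : Type*) [CommRing F] (n : ℕ) : ℕ :=
  Nat.card {c : Fin n → F // prodEta c 0 0 ≠ 0}

theorem card_unit {F : Type*} [Field F] (m : ℕ) (e : F) (he : e * e = 1) :
    Nat.card {c : Fin (m+3) → F // prodEta c = e • 1 ∧ c 1 ≠ 0} = UU F m := by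
  unfold UU
  refine Nat.card_eq_of_bijective (fun c => ⟨fun i => c.1 i.succ.succ.succ, ?_⟩) ⟨?_, ?_⟩
  · obtain ⟨c, hc, h1⟩ := c
    rw [prodEta_three, three_expand _ _ _ _ _ (prodEta_det _)] at hc
    intro h0
    apply h1
    rw [hc.1]
    simp only at h0
    rw [h0]; simp
  · rintro ⟨c, hc, h1⟩ ⟨c', hc', h1'⟩ h
    simp only [Subtype.mk.injEq] at h
    rw [prodEta_three] at hc hc'
    rw [← h] at hc'
    obtain ⟨r0, r1, r2⟩ := three_unique (prodEta_det _) (isUnit_iff_ne_zero.2 h1) hc hc'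
    exact Subtype.ext (ext3 r0 r1 r2 (fun i => congrFun h i))
  · rintro ⟨t, ht⟩
    obtain ⟨a, b, d, hb, h⟩ := three_exists e he _ (prodEta_det t) (isUnit_iff_ne_zero.2 ht)
    refine ⟨⟨cons3 a b d t, ?_, hb.ne_zero⟩, ?_⟩
    · rw [prodEta_cons3, h]
    · rfl

theorem eta_zero_mid {R : Type*} [CommRing R] (a d : R) (M : Matrix (Fin 2) (Fin 2) R) :
    eta a * (eta 0 * (eta d * M)) = - (eta (a + d) * M) := by
  rw [← mul_assoc, ← mul_assoc, ← neg_mul]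
  congr 1
  ext i j
  fin_cases i <;> fin_cases j <;> simp [eta, Matrix.mul_apply, Fin.sum_univ_two]

theorem card_zero {F : Type*} [Field F] [Finite F] (m : ℕ) (e : F) :
    Nat.card {c : Fin (m+3) → F // prodEta c = e • 1 ∧ c 1 = 0} =
      Nat.card F * NN F (m+1) (-e) := by
  unfold NN
  rw [← Nat.card_prod]
  refine Nat.card_eq_of_bijective (fun c => (c.1 0, ⟨Fin.cons (c.1 0 + c.1 2)
      (fun i => c.1 i.succ.succ.succ), ?_⟩)) ⟨?_, ?_⟩
  · obtain ⟨c, hc, h1⟩ := c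
    rw [prodEta_three, h1, eta_zero_mid] at hc
    rw [prodEta_succ]
    simp only [Fin.cons_zero, Fin.cons_succ]
    rw [neg_smul, ← hc, neg_neg]
  · rintro ⟨c, hc, h1⟩ ⟨c', hc', h1'⟩ h
    simp only [Prod.mk.injEq, Subtype.mk.injEq, Fin.cons_inj] at h
    obtain ⟨h0, h2, h3⟩ := h
    refine Subtype.ext (ext3 h0 (h1.trans h1'.symm) ?_ (fun i => congrFun h3 i))
    rw [h0] at h2
    exact add_left_cancel h2
  · rintro ⟨a, t, ht⟩
    refine ⟨⟨cons3 a 0 (t 0 - a) (fun i => t i.succ), ?_, rfl⟩, ?_⟩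
    · rw [prodEta_cons3, eta_zero_mid, add_sub_cancel, ← prodEta_succ, ht]; simp
    · simp only [Prod.mk.injEq, Subtype.mk.injEq]
      refine ⟨rfl, ?_⟩
      funext i
      refine Fin.cases ?_ (fun i => ?_) i
      · simp [cons3_0, cons3_2]
      · simp [cons3_s]

theorem card_split {α : Type*} [Finite α] (P Q : α → Prop) :
    Nat.card {a // P a} = Nat.card {a // P a ∧ ¬ Q a} + Nat.card {a // P a ∧ Q a} := by
  classical
  have := Fintype.ofFinite α
  simp only [Nat.card_eq_fintype_card, Fintype.card_subtype]
  rw [← Finset.card_filter_add_card_filter_not (s := Finset.univ.filter P) Q, add_comm]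
  simp [Finset.filter_filter]

theorem NN_rec {F : Type*} [Field F] [Finite F] (m : ℕ) (e : F) (he : e * e = 1) :
    NN F (m+3) e = UU F m + Nat.card F * NN F (m+1) (-e) := by
  rw [← card_zero, ← card_unit m e he]
  exact card_split _ (fun c : Fin (m+3) → F => c 1 = 0)

theorem UU_zero {F : Type*} [Field F] : UU F 0 = 1 := by
  unfold UU
  simp [prodEta_zero]

theorem prodEta_entry {R : Type*} [CommRing R] {n : ℕ} (c : Fin (n+1) → R) :
    prodEta c 0 0 = c 0 * prodEta (fun i : Fin n => c i.succ) 0 0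
      - prodEta (fun i : Fin n => c i.succ) 1 0 := by
  rw [prodEta_succ]
  simp [eta, Matrix.mul_apply, Fin.sum_univ_two, sub_eq_add_neg]

/-- The tuples with zero continuant of length m+1 biject with tuples of length m with nonzero
continuant. -/
theorem card_ZZ {F : Type*} [Field F] (m : ℕ) :
    Nat.card {c : Fin (m+1) → F // prodEta c 0 0 = 0} = UU F m := by
  unfold UU
  refine Nat.card_eq_of_bijective (fun c => ⟨fun i => c.1 i.succ, ?_⟩) ⟨?_, ?_⟩
  · obtain ⟨c, hc⟩ := c
    simp only
    intro h0
    have hd := prodEta_det (fun i : Fin m => c i.succ)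
    rw [prodEta_entry, h0] at hc
    rw [Matrix.det_fin_two, h0] at hd
    have : prodEta (fun i : Fin m => c i.succ) 1 0 = 0 := by linear_combination -hc
    rw [this] at hd
    simp at hd
  · rintro ⟨c, hc⟩ ⟨c', hc'⟩ h
    simp only [Subtype.mk.injEq] at h
    have hd := prodEta_det (fun i : Fin m => c i.succ)
    rw [Matrix.det_fin_two] at hd
    rw [prodEta_entry] at hc hc'
    rw [← h] at hc'
    have h0 : prodEta (fun i : Fin m => c i.succ) 0 0 ≠ 0 := by
      intro h0
      rw [h0] at hd hc
      have : prodEta (fun i : Fin m => c i.succ) 1 0 = 0 := by linear_combination -hc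
      rw [this] at hd
      simp at hd
    have h1 : c 0 = c' 0 := by
      apply mul_right_cancel₀ h0
      linear_combination hc - hc'
    apply Subtype.ext
    funext i
    refine Fin.cases h1 (fun i => congrFun h i) i
  · rintro ⟨t, ht⟩
    refine ⟨⟨Fin.cons (prodEta t 1 0 / prodEta t 0 0) t, ?_⟩, ?_⟩
    · rw [prodEta_entry]
      simp only [Fin.cons_zero, Fin.cons_succ]
      field_simp
      ring
    · simp

theorem UU_rec {F : Type*} [Field F] [Finite F] (m : ℕ) :
    UU F (m+1) + UU F m = Nat.card F ^ (m+1) := by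
  have h := card_split (fun _ : Fin (m+1) → F => True) (fun c => prodEta c 0 0 = 0)
  simp only [true_and] at h
  rw [card_ZZ] at h
  have h2 : Nat.card {_c : Fin (m+1) → F // True} = Nat.card F ^ (m+1) := by
    rw [Nat.card_congr (Equiv.subtypeUnivEquiv (fun _ => trivial)), Nat.card_fun]
    simp
  rw [← h2, h]
  rfl

theorem UU_odd {F : Type*} [Field F] [Finite F] (k : ℕ) :
    ((Nat.card F : ℤ) + 1) * UU F (2*k+1) = (Nat.card F : ℤ)^(2*k+2) - 1 := by
  induction k with
  | zero =>
    have u := UU_rec (F := F) 0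
    rw [UU_zero] at u
    zify at u
    simp only [Nat.mul_zero, zero_add] at *
    linear_combination ((Nat.card F : ℤ) + 1) * u
  | succ k ih =>
    have u1 := UU_rec (F := F) (2*k+2)
    have u2 := UU_rec (F := F) (2*k+1)
    zify at u1 u2
    rw [show 2*(k+1)+1 = 2*k+2+1 by ring]
    rw [show 2*k+1+1 = 2*k+2 by ring] at u2
    linear_combination ((Nat.card F : ℤ) + 1) * (u1 - u2) + ih

theorem NN_two {F : Type*} [Field F] (h2 : (2 : F) ≠ 0) : NN F 2 1 = 0 := by
  unfold NN
  rw [Nat.card_eq_zero]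
  left
  constructor
  rintro ⟨c, hc⟩
  have := congrFun (congrFun hc 1) 1
  rw [prodEta_succ, prodEta_succ, prodEta_zero] at this
  simp [eta, Matrix.mul_apply, Fin.sum_univ_two] at this
  apply h2
  linear_combination -this

theorem NN_formula {F : Type*} [Field F] [Finite F] (h2 : (2 : F) ≠ 0) (k : ℕ) :
    (NN F (4*k+4) (-1) : ℤ) = ((Nat.card F : ℤ) ^ (2*k+1) - 1) *
      ∑ i ∈ Finset.range (k+1), ((Nat.card F : ℤ)^2)^i := by
  induction k with
  | zero =>
    have h := NN_rec (F := F) 1 (-1) (by ring)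
    have hU := UU_rec (F := F) 0
    rw [UU_zero] at hU
    rw [neg_neg, NN_two h2] at h
    simp only [Nat.mul_zero, zero_add] at *
    rw [h]
    have : ((UU F 1 + 1 : ℕ) : ℤ) = ((Nat.card F ^ 1 : ℕ) : ℤ) := by rw [hU]
    push_cast at this
    simp
    linear_combination this
  | succ k ih =>
    have r1 := NN_rec (F := F) (4*k+5) (-1) (by ring)
    have r2 := NN_rec (F := F) (4*k+3) 1 (by ring)
    have u1 := UU_rec (F := F) (4*k+4)
    have u2 := UU_rec (F := F) (4*k+3)
    rw [neg_neg] at r1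
    have e1 : 4 * (k+1) + 4 = 4*k+5+3 := by ring
    rw [e1, r1, show 4*k+5+1 = 4*k+3+3 by ring, r2, Finset.sum_range_succ]
    rw [show 4*k+3+1 = 4*k+4 by ring] at *
    rw [show 4*k+4+1 = 4*k+5 by ring] at *
    have g := geom_sum_mul ((Nat.card F : ℤ)^2) (k+1)
    zify at u1 u2
    push_cast
    rw [ih]
    generalize (∑ i ∈ Finset.range (k+1), ((Nat.card F : ℤ)^2)^i) = S at *
    have hU := UU_odd (F := F) (2*k+1)
    have hq : (Nat.card F : ℤ) + 1 ≠ 0 := by positivity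
    rw [show 2*(2*k+1)+1 = 4*k+3 by ring] at hU
    generalize (Nat.card F : ℤ) = q at *
    have e2 : (UU F (4*k+5) : ℤ) + q * UU F (4*k+3) = q^(4*k+5) - 1 := by
      apply mul_left_cancel₀ hq
      linear_combination (q + 1) * (u1 - u2) + (q + 1) * hU
    linear_combination e2 - g

theorem fiber_card {p r : ℕ} (hp : p.Prime) (hr : 1 ≤ r) (f : ZMod (p^r) →+* ZMod p) (m : ℕ)
    (t : Fin m → ZMod p) :
    Nat.card {c : Fin m → ZMod (p^r) // (fun i => f (c i)) = t} = p ^ (m * (r-1)) := by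
  have : Fact p.Prime := ⟨hp⟩
  have : NeZero (p^r) := ⟨pow_ne_zero _ hp.ne_zero⟩
  have hf : Function.Surjective f := ZMod.ringHom_surjective f
  have h1 : ∀ x : ZMod p, Nat.card {c : ZMod (p^r) // f c = x} = p ^ (r-1) := by
    have hx : ∀ x : ZMod p, Nat.card {c : ZMod (p^r) // f c = x} =
        Nat.card {c : ZMod (p^r) // f c = 0} := by
      intro x
      obtain ⟨y, rfl⟩ := hf x
      refine Nat.card_eq_of_bijective (fun c => ⟨c.1 - y, by simp [c.2]⟩) ⟨?_, ?_⟩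
      · rintro ⟨c, hc⟩ ⟨c', hc'⟩ h
        simpa using h
      · rintro ⟨c, hc⟩
        exact ⟨⟨c + y, by simp [hc]⟩, by simp⟩
    have hs : Nat.card (ZMod (p^r)) = Nat.card ((x : ZMod p) × {c : ZMod (p^r) // f c = x}) :=
      Nat.card_congr (Equiv.sigmaFiberEquiv f).symm
    rw [Nat.card_sigma] at hs
    simp only [hx] at hs
    rw [Finset.sum_const, Finset.card_univ, ZMod.card, Nat.card_zmod, smul_eq_mul] at hs
    intro x
    rw [hx]
    apply Nat.eq_of_mul_eq_mul_left hp.pos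
    rw [← hs, ← pow_succ', Nat.sub_add_cancel hr]
  have e : {c : Fin m → ZMod (p^r) // (fun i => f (c i)) = t} ≃
      ((i : Fin m) → {c : ZMod (p^r) // f c = t i}) :=
    { toFun := fun c i => ⟨c.1 i, congrFun c.2 i⟩
      invFun := fun c => ⟨fun i => (c i).1, funext fun i => (c i).2⟩
      left_inv := fun c => rfl
      right_inv := fun c => rfl }
  rw [Nat.card_congr e, Nat.card_pi]
  simp only [h1]
  rw [Finset.prod_const, Finset.card_univ, Fintype.card_fin, ← pow_mul, mul_comm]

theorem unit_iff {p r : ℕ} (hp : p.Prime) (hr : 1 ≤ r) (f : ZMod (p^r) →+* ZMod p)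
    (x : ZMod (p^r)) (hx : f x ≠ 0) : IsUnit x := by
  have : Fact p.Prime := ⟨hp⟩
  have : NeZero (p^r) := ⟨pow_ne_zero _ hp.ne_zero⟩
  obtain ⟨k, rfl⟩ := ZMod.natCast_zmod_surjective x
  rw [ZMod.isUnit_iff_coprime]
  rw [map_natCast, Ne, ZMod.natCast_eq_zero_iff] at hx
  exact ((hp.coprime_iff_not_dvd.2 hx).symm).pow_right r

theorem fib_base {p r : ℕ} (hp : p.Prime) (hr : 1 ≤ r) (f : ZMod (p^r) →+* ZMod p) (m : ℕ)
    (c0 : Fin (m+3) → ZMod p) (hc0 : prodEta c0 = -1) (h1 : c0 1 ≠ 0) :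
    Nat.card {c : Fin (m+3) → ZMod (p^r) // prodEta c = -1 ∧ (fun i => f (c i)) = c0} =
      p ^ (m * (r-1)) := by
  have : Fact p.Prime := ⟨hp⟩
  have hone : ∀ S : Type, ∀ [CommRing S],
    (-1 : Matrix (Fin 2) (Fin 2) S) = (-1 : S) • 1 := by intro S _; simp
  rw [← fiber_card hp hr f m (fun i => c0 i.succ.succ.succ)]
  refine Nat.card_eq_of_bijective (fun c => ⟨fun i => c.1 i.succ.succ.succ, ?_⟩) ⟨?_, ?_⟩
  · obtain ⟨c, hc, h⟩ := c
    funext i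
    exact congrFun h _
  · rintro ⟨c, hc, hf⟩ ⟨c', hc', hf'⟩ h
    simp only [Subtype.mk.injEq] at h
    rw [prodEta_three, hone] at hc hc'
    rw [← h] at hc'
    have hu : IsUnit (c 1) := by
      apply unit_iff hp hr f
      rw [← hf] at h1
      exact h1
    obtain ⟨r0, r1, r2⟩ := three_unique (prodEta_det _) hu hc hc'
    exact Subtype.ext (ext3 r0 r1 r2 (fun i => congrFun h i))
  · rintro ⟨t, ht⟩
    rw [prodEta_three, hone, ← ht, prodEta_map] at hc0
    have hdet : ((prodEta t).map f).det = 1 := by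
      rw [← prodEta_map, prodEta_det]
    have hu : IsUnit (prodEta t 0 0) := by
      apply unit_iff hp hr f
      intro h0
      rw [three_expand _ _ _ _ _ hdet] at hc0
      apply h1
      rw [hc0.1]
      simp [h0]
    obtain ⟨a, b, d, hb, h⟩ := three_exists (-1) (by ring) _ (prodEta_det t) hu
    have h' := prodEta_map f (cons3 a b d t)
    rw [prodEta_cons3, h, prodEta_three] at h'
    have h'' : (((-1 : ZMod (p^r)) • (1 : Matrix (Fin 2) (Fin 2) (ZMod (p^r)))).map f) =
        (-1 : ZMod p) • 1 := by
      ext i j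
      fin_cases i <;> fin_cases j <;> simp
    rw [h''] at h'
    simp only [cons3_s] at h'
    rw [prodEta_map] at h'
    obtain ⟨r0, r1, r2⟩ := three_unique hdet (isUnit_iff_ne_zero.2 h1) hc0 h'
    refine ⟨⟨cons3 a b d t, ?_, ?_⟩, ?_⟩
    · rw [prodEta_cons3, h, hone]
    · exact ext3 r0.symm r1.symm r2.symm (fun i => congrFun ht i)
    · rfl

theorem fib_rot {R S : Type*} [CommRing R] [CommRing S] (f : R →+* S) (n : ℕ)
    (c0 : Fin (n+1) → S) :
    Nat.card {c : Fin (n+1) → R // prodEta c = -1 ∧ (fun i => f (c i)) = c0} =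
    Nat.card {c : Fin (n+1) → R // prodEta c = -1 ∧ (fun i => f (c i)) = fun i => c0 (i+1)} := by
  refine Nat.card_eq_of_bijective (fun c => ⟨fun i => c.1 (i+1), ?_, ?_⟩) ⟨?_, ?_⟩
  · exact (prodEta_rot _).2 c.2.1
  · funext i; exact congrFun c.2.2 (i+1)
  · rintro ⟨c, hc⟩ ⟨c', hc'⟩ h
    simp only [Subtype.mk.injEq] at h
    apply Subtype.ext
    funext i
    simpa using congrFun h (i-1)
  · rintro ⟨c, hc, hf⟩
    refine ⟨⟨fun i => c (i-1), ?_, ?_⟩, ?_⟩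
    · rw [← prodEta_rot]; simpa using hc
    · funext i; simpa using congrFun hf (i-1)
    · simp

theorem fib_all {p r : ℕ} (hp : p.Prime) (hr : 1 ≤ r) (f : ZMod (p^r) →+* ZMod p) (m : ℕ) (k : ℕ) :
    ∀ (c0 : Fin (m+3) → ZMod p) (_ : prodEta c0 = -1) (i : Fin (m+3)) (_ : i.val = k + 1) (_ : c0 i ≠ 0),
    Nat.card {c : Fin (m+3) → ZMod (p^r) // prodEta c = -1 ∧ (fun i => f (c i)) = c0} =
      p ^ (m * (r-1)) := by
  induction k with
  | zero =>
    intro c0 h i hi h1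
    obtain rfl : i = 1 := Fin.ext (by simpa using hi)
    exact fib_base hp hr f m c0 h h1
  | succ k ih =>
    intro c0 h i hi h1
    rw [fib_rot f (m+2)]
    refine ih _ ((prodEta_rot _).2 h) (i - 1) ?_ ?_
    · rw [Fin.val_sub_one_of_ne_zero]
      · omega
      · intro h0
        have : i.val = 0 := by rw [h0]; rfl
        omega
    · simpa using h1

theorem prodEta_const_zero {R : Type*} [CommRing R] (k : ℕ) :
    prodEta (fun _ : Fin (4*k) => (0 : R)) = 1 := by
  unfold prodEta
  rw [List.ofFn_const, List.prod_replicate, pow_mul]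
  have : (eta (0:R))^4 = 1 := by
    ext i j
    fin_cases i <;> fin_cases j <;> simp [eta, pow_succ, Matrix.mul_apply, Fin.sum_univ_two]
  rw [this, one_pow]

theorem stmt3 (p r : ℕ) (hp : p.Prime) (hp2 : 2 < p) (hr : 1 ≤ r) (n : ℕ) (hn : 4 ≤ n)
    (hn4 : n % 4 = 0) :
    Nat.card {c : Fin n → ZMod (p ^ r) // prodEta c = -1} =
      p ^ ((n - 3) * (r - 1)) * (p ^ ((n - 2) / 2) - 1) * qInt (n / 4) (p ^ 2) := by
  have : Fact p.Prime := ⟨hp⟩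
  have : NeZero (p^r) := ⟨pow_ne_zero _ hp.ne_zero⟩
  obtain ⟨k, rfl⟩ : ∃ k, n = 4*k+4 := ⟨n/4-1, by omega⟩
  have h2 : (2 : ZMod p) ≠ 0 := by
    intro h
    have : ((2:ℕ) : ZMod p) = 0 := by exact_mod_cast h
    rw [ZMod.natCast_eq_zero_iff] at this
    exact absurd (Nat.le_of_dvd (by norm_num) this) (by omega)
  let f : ZMod (p^r) →+* ZMod p := ZMod.castHom (dvd_pow_self p (by omega)) (ZMod p)
  have hfib : ∀ c0 : {c : Fin (4*k+4) → ZMod p // prodEta c = -1},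
      Nat.card {c : Fin (4*k+4) → ZMod (p^r) // prodEta c = -1 ∧ (fun i => f (c i)) = c0.1} =
        p ^ ((4*k+1) * (r-1)) := by
    rintro ⟨c0, hc0⟩
    have : ∃ i, c0 i ≠ 0 := by
      by_contra hcon
      push Not at hcon
      have hz : c0 = fun _ => 0 := funext hcon
      have := prodEta_const_zero (R := ZMod p) (k+1)
      rw [show (4 * (k+1)) = 4*k+4 by ring, ← hz, hc0] at this
      have := congrFun (congrFun this 0) 0
      simp at this
      apply h2
      linear_combination -this
    obtain ⟨i, hi⟩ := this
    by_cases h0 : i = 0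
    · rw [fib_rot f (4*k+3)]
      refine fib_all hp hr f (4*k+1) (4*k+2) _ ((prodEta_rot _).2 hc0) (Fin.last (4*k+3)) rfl ?_
      rw [Fin.last_add_one, ← h0]
      exact hi
    · refine fib_all hp hr f (4*k+1) (i.val - 1) c0 hc0 i ?_ hi
      have : i.val ≠ 0 := fun h => h0 (Fin.ext h)
      omega
  have e : {c : Fin (4*k+4) → ZMod (p^r) // prodEta c = -1} ≃
      (c0 : {c : Fin (4*k+4) → ZMod p // prodEta c = -1}) ×
       {c : Fin (4*k+4) → ZMod (p^r) // prodEta c = -1 ∧ (fun i => f (c i)) = c0.1} :=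
    { toFun := fun c => ⟨⟨fun i => f (c.1 i), by
          rw [prodEta_map, c.2]
          ext i j
          fin_cases i <;> fin_cases j <;> simp⟩, ⟨c.1, c.2, rfl⟩⟩
      invFun := fun x => ⟨x.2.1, x.2.2.1⟩
      left_inv := fun c => rfl
      right_inv := by
        rintro ⟨⟨c0, hc0⟩, ⟨c, hc, h⟩⟩
        simp only at h
        subst h
        rfl }
  have : Fintype {c : Fin (4*k+4) → ZMod p // prodEta c = -1} := Fintype.ofFinite _
  rw [Nat.card_congr e, Nat.card_sigma]
  simp only [hfib]
  rw [Finset.sum_const, Finset.card_univ, ← Nat.card_eq_fintype_card, smul_eq_mul]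
  have hN := NN_formula h2 k
  have hN' : NN (ZMod p) (4*k+4) (-1) = Nat.card {c : Fin (4*k+4) → ZMod p // prodEta c = -1} := by
    unfold NN
    simp
  rw [hN'] at hN
  have e1 : (4*k+4)/4 = k+1 := by omega
  have e2 : (4*k+4-2)/2 = 2*k+1 := by omega
  have e3 : 4*k+4-3 = 4*k+1 := by omega
  rw [e1, e2, e3, mul_comm, mul_assoc]
  congr 1
  zify
  rw [hN, Nat.cast_sub (Nat.one_le_pow _ _ hp.pos)]
  simp [qInt]
end

section
/- Let p be a prime, r ∈ ℕ_{≥2}, R = ℤ/p^rℤ with maximal ideal I = pR, and let n ≥ 4 be even. For ℓ ∈ {1, …, r−1}: σ_n(ℓ) = Σ_{j=1}^{ℓ−1} n_j·σ_{n−2}(j)·μ(j) + Σ_{j=ℓ+1}^{r} n_j·σ_{n−2}(j)·μ(ℓ) + σ_{n−2}(ℓ)·( μ(ℓ)·(p−2)·p^{r−ℓ−1} + Σ_{j=ℓ+1}^{r} n_j·μ(j) ). Moreover σ_n(r) = Σ_{j=1}^{r} n_j·σ_{n−2}(j)·μ(j). -/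
open Matrix

/-- `σ_n(ℓ) := |σ_{(-1)^(n/2)+p^ℓ, n}|`: the number of tuples `(c₁, …, cₙ) ∈ Iⁿ`
(`I = pR ⊆ R = ℤ/p^rℤ`) with `[c₁, …, cₙ] = diag(z, z⁻¹)` for `z = (-1)^(n/2) + p^ℓ`. -/
noncomputable def sigmaCount (p r n ℓ : ℕ) : ℕ :=
  Nat.card {c : Fin n → ZMod (p ^ r) //
    (∀ i, c i ∈ Ideal.span {(p : ZMod (p ^ r))}) ∧
    prodEta c = !![(-1) ^ (n / 2) + (p : ZMod (p ^ r)) ^ ℓ, 0;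
                   0, Ring.inverse ((-1) ^ (n / 2) + (p : ZMod (p ^ r)) ^ ℓ)]}

/-- `μ(j)`. -/
def muF (p r j : ℕ) : ℕ :=
  if j = r then (r - 1) * p ^ r - (r - 2) * p ^ (r - 1) else (p ^ r - p ^ (r - 1)) * (j - 1)

/-- `n_j`. -/
def nF (p r j : ℕ) : ℕ := if j = r then 1 else p ^ (r - j) - p ^ (r - j - 1)

section general
variable {R : Type*} [CommRing R]

open Classical in
noncomputable def TT (I : Ideal R) [Fintype I] : ℕ → Matrix (Fin 2) (Fin 2) R → Matrix (Fin 2) (Fin 2) R → ℕ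
  | 0, A, M => if A = M then 1 else 0
  | n + 1, A, M => ∑ a : I, TT I n (A * eta (a : R)) M

theorem TT_succ (I : Ideal R) [Fintype I] (n : ℕ) (A M : Matrix (Fin 2) (Fin 2) R) :
    TT I (n+1) A M = ∑ a : I, TT I n (A * eta (a : R)) M := rfl

theorem prodEta_cons {n : ℕ} (a : R) (c : Fin n → R) :
    prodEta (Fin.cons a c : Fin (n+1) → R) = eta a * prodEta c := by
  simp [prodEta, List.ofFn_succ]

theorem TT_card [Finite R] (I : Ideal R) [Fintype I] (n : ℕ) (A M : Matrix (Fin 2) (Fin 2) R) :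
    Nat.card {c : Fin n → R // (∀ i, c i ∈ I) ∧ A * prodEta c = M} = TT I n A M := by
  induction n generalizing A with
  | zero =>
    have h0 : ∀ c : Fin 0 → R, prodEta c = 1 := by intro c; simp [prodEta]
    simp only [TT, h0, mul_one]
    split_ifs with h
    · have : Nonempty {c : Fin 0 → R // (∀ i, c i ∈ I) ∧ A = M} :=
        ⟨⟨Fin.elim0, fun i => i.elim0, h⟩⟩
      rw [Nat.card_eq_one_iff_unique]
      exact ⟨⟨fun a b => Subtype.ext (Subsingleton.elim _ _)⟩, this⟩
    · have : IsEmpty {c : Fin 0 → R // (∀ i, c i ∈ I) ∧ A = M} := ⟨fun c => h c.2.2⟩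
      exact Nat.card_of_isEmpty
  | succ n ih =>
    rw [TT_succ]
    simp_rw [← ih]
    rw [← Nat.card_sigma]
    apply Nat.card_congr
    refine ⟨fun c => ⟨⟨c.1 0, c.2.1 0⟩, ⟨Fin.tail c.1, fun i => c.2.1 _, ?_⟩⟩,
      fun x => ⟨Fin.cons x.1.1 x.2.1, ?_, ?_⟩, ?_, ?_⟩
    · rw [mul_assoc]
      simp only
      rw [← prodEta_cons, Fin.cons_self_tail]
      exact c.2.2
    · intro i
      refine Fin.cases ?_ ?_ i
      · exact x.1.2
      · intro i; simpa using x.2.2.1 i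
    · rw [prodEta_cons, ← mul_assoc]; exact x.2.2.2
    · intro c
      apply Subtype.ext
      exact Fin.cons_self_tail _
    · intro x
      rcases x with ⟨a, c⟩
      rfl

def dg (u : Rˣ) : Matrix (Fin 2) (Fin 2) R := !![(u : R), 0; 0, ((u⁻¹ : Rˣ) : R)]

theorem dg_mul (u v : Rˣ) : dg u * dg v = dg (u * v) := by
  simp [dg, mul_comm]

theorem dg_one : dg (1 : Rˣ) = 1 := by
  simp [dg, Matrix.one_fin_two]

theorem dg_eta (u : Rˣ) (a : R) : dg u * eta a = eta ((u * u : Rˣ) * a) * dg (u⁻¹) := by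
  have h : (u : R) * ((u⁻¹ : Rˣ) : R) = 1 := by simp
  simp only [dg, eta, Matrix.mul_fin_two, inv_inv, Units.val_mul]
  congr 1
  ext i j
  fin_cases i <;> fin_cases j <;> simp
  linear_combination (-(u : R) * a) * h

theorem sum_smul_I (I : Ideal R) [Fintype I] (u : Rˣ) (f : R → ℕ) :
    ∑ a : I, f (u * a) = ∑ a : I, f a := by
  exact Equiv.sum_comp (MulAction.toPerm u : Equiv.Perm I) (fun a : I => f a)

theorem sum_sub_I (I : Ideal R) [Fintype I] (x : R) (hx : x ∈ I) (f : R → ℕ) :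
    ∑ a : I, f (a - x) = ∑ a : I, f a := by
  exact Equiv.sum_comp (Equiv.subRight (⟨x, hx⟩ : I)) (fun a : I => f a)

theorem TT_dg (I : Ideal R) [Fintype I] (k : ℕ) (u : Rˣ) (A M : Matrix (Fin 2) (Fin 2) R) :
    TT I (2 * k) (A * dg u) M = TT I (2 * k) A (M * dg u⁻¹) := by
  induction k generalizing A with
  | zero =>
    simp only [mul_zero, TT]
    congr 1
    apply propext
    constructor
    · rintro rfl; rw [mul_assoc, dg_mul, mul_inv_cancel, dg_one, mul_one]
    · rintro rfl; rw [mul_assoc, dg_mul, inv_mul_cancel, dg_one, mul_one]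
  | succ k ih =>
    rw [show 2 * (k+1) = 2 * k + 1 + 1 by ring]
    simp only [TT_succ]
    have : ∀ a b : R, A * dg u * eta a * eta b =
        A * eta ((u * u : Rˣ) * a) * eta ((u⁻¹ * u⁻¹ : Rˣ) * b) * dg u := by
      intro a b
      rw [mul_assoc A, dg_eta, ← mul_assoc, mul_assoc _ (dg _), dg_eta, inv_inv, ← mul_assoc]
    simp_rw [this, ih]
    rw [sum_smul_I I (u*u) (fun a => ∑ b : I, TT I (2*k) (A * eta a * eta ((u⁻¹ * u⁻¹ : Rˣ) * (b:R))) (M * dg u⁻¹))]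
    refine Finset.sum_congr rfl fun a _ => ?_
    rw [sum_smul_I I (u⁻¹*u⁻¹) (fun b => TT I (2*k) (A * eta (a : R) * eta b) (M * dg u⁻¹))]

theorem eta4 (a b c d : R) (w : Rˣ) (hw : (w : R) = b * c - 1) :
    eta a * eta b * eta c * eta d =
      eta (a - (w⁻¹ : Rˣ) * c) * eta ((w * w : Rˣ) * (d - (w⁻¹ : Rˣ) * b)) * dg w⁻¹ := by
  rw [show eta a * eta b * eta c * eta d = eta (a - (w⁻¹ : Rˣ) * c) * (dg w * eta (d - (w⁻¹ : Rˣ) * b)) from ?_,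
    dg_eta, mul_assoc]
  have h : (w : R) * ((w⁻¹ : Rˣ) : R) = 1 := by simp
  simp only [dg]
  generalize ((w⁻¹ : Rˣ) : R) = v at *
  generalize (w : R) = w at *
  simp only [eta, Matrix.mul_fin_two]
  ext i j
  fin_cases i <;> fin_cases j <;> simp
  · linear_combination (a*b+c*d-v*b*c-1)*h + (-a*d+v)*hw
  · linear_combination (-c)*h + a*hw
  · linear_combination b*h - d*hw
  · linear_combination hw

theorem TT_rec (I : Ideal R) [Fintype I] (k : ℕ) (w : I → I → Rˣ)
    (hw : ∀ b c, (w b c : R) = b * c - 1) (z : Rˣ) :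
    TT I (2 * (k + 2)) 1 (dg z) = ∑ b : I, ∑ c : I, TT I (2 * (k + 1)) 1 (dg (z * w b c)) := by
  rw [show 2 * (k+2) = 2 * k + 1 + 1 + 1 + 1 by ring, show 2 * (k+1) = 2 * k + 1 + 1 by ring]
  simp only [TT_succ, one_mul]
  rw [Finset.sum_comm]
  refine Finset.sum_congr rfl fun b _ => ?_
  rw [Finset.sum_comm]
  refine Finset.sum_congr rfl fun c _ => ?_
  simp_rw [fun a d : I => eta4 (a : R) (b : R) (c : R) (d : R) (w b c) (hw b c), TT_dg, inv_inv, dg_mul]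
  rw [sum_sub_I I _ (I.mul_mem_left _ c.2) (fun a => ∑ d : I, TT I (2*k) (eta a * eta ((w b c * w b c : Rˣ) * ((d:R) - ((w b c)⁻¹ : Rˣ) * b))) (dg (z * w b c)))]
  refine Finset.sum_congr rfl fun a _ => ?_
  rw [sum_sub_I I _ (I.mul_mem_left _ b.2) (fun d => TT I (2*k) (eta (a:R) * eta ((w b c * w b c : Rˣ) * d)) (dg (z * w b c)))]
  rw [sum_smul_I I (w b c * w b c) (fun d => TT I (2*k) (eta (a:R) * eta d) (dg (z * w b c)))]

/-- class function -/
noncomputable def GG (I : Ideal R) [Fintype I] (k : ℕ) (y : R) : ℕ :=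
  TT I (2 * k) 1 !![(-1)^k * (1 + y), 0; 0, Ring.inverse ((-1)^k * (1 + y))]

theorem GG_unit (I : Ideal R) [Fintype I] (k : ℕ) (y : R) (u : Rˣ) (hu : (u : R) = 1 + y) :
    GG I k y = TT I (2 * k) 1 (dg ((-1)^k * u)) := by
  have : ((-1)^k * (1 + y) : R) = (((-1)^k * u : Rˣ) : R) := by rw [← hu]; push_cast; rfl
  rw [GG, this, Ring.inverse_unit]; rfl

theorem GG_rec (I : Ideal R) [Fintype I] (hI : ∀ x ∈ I, IsUnit (1 + x)) (k : ℕ) (y : R) (hy : y ∈ I) :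
    GG I (k + 2) y = ∑ b : I, ∑ c : I, GG I (k + 1) (y - b * c) := by
  obtain ⟨u, hu⟩ := hI y hy
  have h1 : ∀ b c : I, ∃ v : Rˣ, (v : R) = b * c - 1 := by
    intro b c
    obtain ⟨v, hv⟩ := hI (-(b * c)) (I.neg_mem (I.mul_mem_left _ c.2))
    exact ⟨-v, by rw [Units.val_neg, hv]; ring⟩
  choose w hw using h1
  rw [GG_unit I _ y u hu, TT_rec I k w hw]
  refine Finset.sum_congr rfl fun b _ => ?_
  rw [← sum_smul_I I u (fun c => GG I (k+1) (y - b * c))]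
  refine Finset.sum_congr rfl fun c _ => ?_
  rw [GG_unit I _ _ (- (u * w b c))]
  · congr 2; rw [pow_succ _ (k+1)]; simp [mul_assoc]
  · push_cast; rw [hw, hu]; ring

theorem GG_one (I : Ideal R) [Fintype I] (y : R) (hy : y ≠ 0) : GG I 1 y = 0 := by
  simp only [GG, mul_one, TT, one_mul]
  refine Finset.sum_eq_zero fun a _ => Finset.sum_eq_zero fun b _ => if_neg fun h => hy ?_
  have h00 := congrFun (congrFun h 0) 0
  have h01 := congrFun (congrFun h 0) 1
  simp [eta] at h00 h01
  simp [h01] at h00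
  exact h00

theorem GG_smul (I : Ideal R) [Fintype I] (hI : ∀ x ∈ I, IsUnit (1 + x)) (k : ℕ) (y : R) (hy : y ∈ I)
    (u : Rˣ) : GG I (k + 1) (u * y) = GG I (k + 1) y := by
  induction k generalizing y with
  | zero =>
    by_cases h : y = 0
    · simp [h]
    · rw [GG_one I y h, GG_one]; simpa using h
  | succ k ih =>
    rw [GG_rec I hI _ _ hy, GG_rec I hI _ _ (I.mul_mem_left _ hy)]
    refine Finset.sum_congr rfl fun b _ => ?_
    rw [← sum_smul_I I u (fun c => GG I (k+1) (u * y - b * c))]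
    refine Finset.sum_congr rfl fun c _ => ?_
    rw [← ih _ (I.sub_mem hy (I.mul_mem_left _ c.2))]
    congr 1; ring

end general

section zmod
variable {p r : ℕ}

open Classical in
noncomputable def vv (x : ZMod (p ^ r)) : ℕ :=
  Nat.findGreatest (fun k => (p : ZMod (p ^ r)) ^ k ∣ x) r

theorem vv_le (x : ZMod (p ^ r)) : vv x ≤ r := by
  classical
  exact Nat.findGreatest_le _

theorem vv_dvd (x : ZMod (p ^ r)) : (p : ZMod (p ^ r)) ^ vv x ∣ x := by
  classical
  exact Nat.findGreatest_spec (P := fun k => (p : ZMod (p ^ r)) ^ k ∣ x) (Nat.zero_le r) (by simp)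

theorem dvd_iff_vv (x : ZMod (p ^ r)) (k : ℕ) (hk : k ≤ r) :
    (p : ZMod (p ^ r)) ^ k ∣ x ↔ k ≤ vv x := by
  classical
  constructor
  · intro h
    exact Nat.le_findGreatest (P := fun k => (p : ZMod (p ^ r)) ^ k ∣ x) hk h
  · intro h
    exact (pow_dvd_pow _ h).trans (vv_dvd x)

theorem p_pow_r : (p : ZMod (p ^ r)) ^ r = 0 := by
  have := ZMod.natCast_self (p ^ r)
  exact_mod_cast this

theorem vv_eq_r (x : ZMod (p ^ r)) : vv x = r ↔ x = 0 := by
  constructor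
  · intro h
    have := vv_dvd x
    rw [h, p_pow_r] at this
    exact zero_dvd_iff.1 this
  · rintro rfl
    exact le_antisymm (vv_le _) ((dvd_iff_vv _ _ le_rfl).1 (dvd_zero _))

theorem vv_sub_ge (x y : ZMod (p ^ r)) (k : ℕ) (hx : k ≤ vv x) (hy : k ≤ vv y) :
    k ≤ vv (y - x) := by
  have hk : k ≤ r := hx.trans (vv_le x)
  rw [← dvd_iff_vv _ _ hk] at *
  exact dvd_sub hy hx

theorem vv_sub_left (x y : ZMod (p ^ r)) (h : vv x < vv y) : vv (y - x) = vv x := by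
  have h1 := vv_sub_ge x y (vv x) le_rfl h.le
  by_contra h2
  have h3 := vv_sub_ge (y - x) y (vv x + 1) (by omega) h
  rw [sub_sub_cancel] at h3
  omega

theorem vv_sub_right (x y : ZMod (p ^ r)) (h : vv y < vv x) : vv (y - x) = vv y := by
  have h1 := vv_sub_ge x y (vv y) h.le le_rfl
  by_contra h2
  have h3 := vv_sub_ge (x - y) x (vv y + 1) ?_ h
  · rw [sub_sub_cancel] at h3
    omega
  · have := vv_sub_ge (y - x) 0 (vv y + 1) (by omega)
      (by rw [(vv_eq_r (0 : ZMod (p^r))).2 rfl]; have := vv_le x; omega)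
    simpa using this

variable [hp : Fact p.Prime]

theorem unit_of_not_dvd (x : ZMod (p ^ r)) (h : ¬ (p : ZMod (p ^ r)) ∣ x) : IsUnit x := by
  rw [← ZMod.natCast_zmod_val x] at h ⊢
  rw [ZMod.isUnit_iff_coprime]
  apply Nat.Coprime.pow_right
  rw [Nat.coprime_comm, hp.out.coprime_iff_not_dvd]
  intro h'
  exact h (by exact_mod_cast Nat.cast_dvd_cast h')

theorem unit_one_add (x : ZMod (p ^ r)) (h : (p : ZMod (p ^ r)) ∣ x) : IsUnit (1 + x) := by
  apply IsNilpotent.isUnit_one_add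
  obtain ⟨y, rfl⟩ := h
  exact ⟨r, by rw [mul_pow, p_pow_r, zero_mul]⟩

theorem exists_unit (x : ZMod (p ^ r)) : ∃ u : (ZMod (p ^ r))ˣ, x = u * (p : ZMod (p ^ r)) ^ vv x := by
  by_cases h : vv x = r
  · exact ⟨1, by rw [h, p_pow_r, mul_zero]; exact (vv_eq_r x).1 h⟩
  · obtain ⟨y, hy⟩ := vv_dvd x
    have : IsUnit y := by
      apply unit_of_not_dvd
      rintro ⟨w, rfl⟩
      have h1 : (p : ZMod (p ^ r)) ^ (vv x + 1) ∣ x := ⟨w, by rw [pow_succ, mul_assoc]; exact hy⟩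
      rw [dvd_iff_vv _ _ (by have := vv_le x; omega)] at h1
      omega
    obtain ⟨u, rfl⟩ := this
    exact ⟨u, by rw [mul_comm]; exact hy⟩

theorem pow_mul_eq_zero (i : ℕ) (hi : i ≤ r) (d : ZMod (p ^ r)) :
    (p : ZMod (p ^ r)) ^ i * d = 0 ↔ (p : ZMod (p ^ r)) ^ (r - i) ∣ d := by
  constructor
  · rw [← ZMod.natCast_zmod_val d]
    intro h
    have h2 : ((p ^ i * d.val : ℕ) : ZMod (p ^ r)) = 0 := by push_cast; exact_mod_cast h
    rw [ZMod.natCast_eq_zero_iff] at h2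
    generalize d.val = m at *
    have h5 : p ^ r = p ^ i * p ^ (r - i) := by rw [← pow_add]; congr 1; omega
    have h3 : p ^ (r - i) ∣ m := Nat.dvd_of_mul_dvd_mul_left (pow_pos hp.out.pos i) (h5 ▸ h2)
    have h4 := Nat.cast_dvd_cast (α := ZMod (p ^ r)) h3
    rwa [Nat.cast_pow] at h4
  · rintro ⟨e, rfl⟩
    rw [← mul_assoc, ← pow_add, show i + (r - i) = r by omega, p_pow_r, zero_mul]

open Finset

theorem card_ge (j : ℕ) (hj : j ≤ r) :
    (univ.filter fun x : ZMod (p ^ r) => j ≤ vv x).card = p ^ (r - j) := by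
  have h1 : Nat.card (AddSubgroup.zmultiples ((p ^ j : ℕ) : ZMod (p ^ r))) = p ^ (r - j) := by
    rw [Nat.card_zmultiples, ZMod.addOrderOf_coe _ (pow_pos hp.out.pos r).ne',
      Nat.gcd_eq_right (pow_dvd_pow p hj), Nat.pow_div hj hp.out.pos]
  rw [← h1]
  symm
  refine Nat.subtype_card _ fun x => ?_
  rw [mem_filter, ← dvd_iff_vv _ _ hj]
  simp only [mem_univ, true_and]
  rw [AddSubgroup.mem_zmultiples_iff]
  constructor
  · rintro ⟨y, rfl⟩
    exact ⟨(y.val : ℤ), by simp [mul_comm]⟩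
  · rintro ⟨k, rfl⟩
    exact ⟨k, by simp [mul_comm]⟩

theorem card_lev (j : ℕ) (hj : j ≤ r) :
    (univ.filter fun x : ZMod (p ^ r) => vv x = j).card = nF p r j := by
  rw [nF]
  split_ifs with h
  · subst h
    have := card_ge (p := p) j le_rfl
    rw [Nat.sub_self, pow_zero] at this
    rw [← this]
    congr 1
    ext x
    simp only [mem_filter, mem_univ, true_and]
    have := vv_le x
    omega
  · have h1 := card_ge (p := p) (r := r) j hj
    have h2 := card_ge (p := p) (r := r) (j + 1) (by omega)
    rw [Nat.sub_sub, ← h1, ← h2, ← card_sdiff_of_subset]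
    · congr 1
      ext x
      simp only [mem_filter, mem_univ, true_and, mem_sdiff]
      omega
    · intro x
      simp only [mem_filter, mem_univ, true_and]
      omega

theorem sum_lev (a : ℕ) (M : ℕ → ℕ) :
    ∑ x ∈ univ.filter (fun x : ZMod (p ^ r) => a ≤ vv x), M (vv x) =
      ∑ j ∈ Icc a r, nF p r j * M j := by
  rw [← sum_fiberwise_of_maps_to (t := Icc a r) (g := fun x => vv x)]
  · refine sum_congr rfl fun j hj => ?_
    rw [mem_Icc] at hj
    rw [← card_lev j hj.2, ← smul_eq_mul, ← sum_const, filter_filter]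
    have : (univ.filter fun x : ZMod (p ^ r) => a ≤ vv x ∧ vv x = j) = univ.filter fun x : ZMod (p ^ r) => vv x = j := by
      ext x
      simp only [mem_filter, mem_univ, true_and]
      omega
    rw [this]
    refine sum_congr rfl fun x hx => ?_
    rw [mem_filter] at hx
    rw [hx.2]
  · intro x hx
    rw [mem_filter] at hx
    exact mem_Icc.2 ⟨hx.2, vv_le x⟩

theorem card_fib (b x : ZMod (p ^ r)) (hb : 1 ≤ vv b) (hx : 1 ≤ vv x) :
    (univ.filter fun c : ZMod (p ^ r) => 1 ≤ vv c ∧ b * c = x).card =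
      if vv b < vv x then p ^ (vv b) else if vv b = r ∧ vv x = r then p ^ (r - 1) else 0 := by
  have hbr := vv_le b
  have hxr := vv_le x
  split_ifs with h1 h2
  · obtain ⟨u, hu⟩ := exists_unit b
    obtain ⟨w, hw⟩ := exists_unit x
    generalize vv b = i at *
    generalize vv x = j at *
    have h0 : b * (((u⁻¹ : (ZMod (p^r))ˣ) : ZMod (p^r)) * (w : ZMod (p^r)) * (p : ZMod (p ^ r)) ^ (j - i)) = x := by
      rw [hu, hw]
      calc _ = ((u : ZMod (p^r)) * ((u⁻¹ : (ZMod (p^r))ˣ) : ZMod (p^r))) * (w : ZMod (p^r)) * ((p : ZMod (p ^ r)) ^ i * (p : ZMod (p ^ r)) ^ (j - i)) := by ring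
        _ = _ := by rw [← pow_add, Units.mul_inv, one_mul]; congr 2; omega
    have hc0 : 1 ≤ vv (((u⁻¹ : (ZMod (p^r))ˣ) : ZMod (p^r)) * (w : ZMod (p^r)) * (p : ZMod (p ^ r)) ^ (j - i)) := by
      rw [← dvd_iff_vv _ _ (by omega)]
      exact Dvd.dvd.mul_left (pow_dvd_pow _ (by omega)) _
    generalize (((u⁻¹ : (ZMod (p^r))ˣ) : ZMod (p^r)) * (w : ZMod (p^r)) * (p : ZMod (p ^ r)) ^ (j - i)) = c0 at *
    have h3 := card_ge (p := p) (r := r) (r - i) (by omega)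
    rw [show r - (r - i) = i by omega] at h3
    rw [← h3]
    refine card_nbij' (fun c => c0 - c) (fun c => c0 - c) ?_ ?_ ?_ ?_
    · intro c hc
      simp only [coe_filter, mem_univ, true_and, Set.mem_ofPred_eq] at hc ⊢
      rw [← dvd_iff_vv _ _ (by omega), ← pow_mul_eq_zero _ hbr]
      rw [← Units.mul_right_eq_zero u, ← mul_assoc, ← hu, mul_sub, h0, hc.2, sub_self]
    · intro c hc
      simp only [coe_filter, mem_univ, true_and, Set.mem_ofPred_eq] at hc ⊢
      refine ⟨vv_sub_ge _ _ _ (by omega) hc0, ?_⟩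
      rw [← dvd_iff_vv _ _ (by omega), ← pow_mul_eq_zero _ hbr] at hc
      rw [mul_sub, h0, hu, mul_assoc, hc, mul_zero, sub_zero]
    · intro c _; simp
    · intro c _; simp
  · have e1 := (vv_eq_r b).1 h2.1
    have e2 := (vv_eq_r x).1 h2.2
    rw [← card_ge (p := p) (r := r) 1 (by omega)]
    congr 1
    ext c
    simp [e1, e2]
  · rw [card_eq_zero, filter_eq_empty_iff]
    rintro c - ⟨hc, rfl⟩
    have h3 : (p : ZMod (p ^ r)) ^ (vv (b * c) + 1) ∣ b * c := by
      rw [pow_succ]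
      apply mul_dvd_mul
      · rw [dvd_iff_vv _ _ hxr]; omega
      · rw [← pow_one (p : ZMod (p ^ r)), dvd_iff_vv _ _ (by omega)]; exact hc
    rw [dvd_iff_vv _ _ (by omega)] at h3
    omega

theorem nF_mul (i : ℕ) (hi : i < r) : nF p r i * p ^ i = p ^ r - p ^ (r - 1) := by
  rw [nF, if_neg (by omega), Nat.sub_mul, ← pow_add, ← pow_add]
  congr 2 <;> omega

theorem card_mu (hr : 2 ≤ r) (x : ZMod (p ^ r)) (hx : 1 ≤ vv x) :
    ∑ b ∈ univ.filter (fun b : ZMod (p ^ r) => 1 ≤ vv b),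
      (univ.filter fun c : ZMod (p ^ r) => 1 ≤ vv c ∧ b * c = x).card = muF p r (vv x) := by
  have hxr := vv_le x
  rw [sum_congr rfl fun b hb => card_fib b x (mem_filter.1 hb).2 hx]
  generalize vv x = j at *
  rw [sum_lev 1 fun i => if i < j then p ^ i else if i = r ∧ j = r then p ^ (r - 1) else 0]
  have h1 : ∀ j ≤ r, ∑ i ∈ Ico 1 j, nF p r i * p ^ i = (p ^ r - p ^ (r - 1)) * (j - 1) := by
    intro j hj
    rw [sum_congr rfl fun i hi => nF_mul i (lt_of_lt_of_le (mem_Ico.1 hi).2 hj)]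
    simp [mul_comm]
  rw [muF]
  split_ifs with h
  · subst h
    rw [← Ico_insert_right hx, sum_insert (by simp)]
    rw [sum_congr rfl (g := fun i => nF p j i * p ^ i) fun i hi => by rw [if_pos (mem_Ico.1 hi).2], h1 _ le_rfl]
    simp only [nF, lt_irrefl, if_true, if_false, and_self, one_mul]
    obtain ⟨s, rfl⟩ : ∃ s, j = s + 2 := ⟨j - 2, by omega⟩
    simp only [Nat.add_sub_cancel, show s + 2 - 1 = s + 1 by omega]
    have : p ^ (s + 1) ≤ p ^ (s + 2) := Nat.pow_le_pow_right hp.out.pos (by omega)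
    obtain ⟨q, hq⟩ := Nat.exists_eq_add_of_le this
    rw [hq]
    rw [Nat.add_sub_cancel_left]
    symm
    apply Nat.sub_eq_of_eq_add
    ring
  · rw [← h1 j hxr]
    have : Ico 1 j ⊆ Icc 1 r := by
      intro i; simp only [mem_Ico, mem_Icc]; omega
    rw [← sum_subset this]
    · refine sum_congr rfl fun i hi => ?_
      rw [if_pos (mem_Ico.1 hi).2]
    · intro i hi hi'
      simp only [mem_Ico, mem_Icc] at hi hi'
      rw [if_neg (by omega), if_neg (by omega), mul_zero]

theorem sum_prod (hr : 2 ≤ r) (f : ZMod (p ^ r) → ℕ) :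
    ∑ b ∈ univ.filter (fun b : ZMod (p ^ r) => 1 ≤ vv b),
      ∑ c ∈ univ.filter (fun b : ZMod (p ^ r) => 1 ≤ vv b), f (b * c) =
    ∑ x ∈ univ.filter (fun b : ZMod (p ^ r) => 1 ≤ vv b), muF p r (vv x) * f x := by
  have h0 : ∑ x ∈ univ.filter (fun b : ZMod (p ^ r) => 1 ≤ vv b), muF p r (vv x) * f x =
      ∑ x ∈ univ.filter (fun b : ZMod (p ^ r) => 1 ≤ vv b), ∑ b ∈ univ.filter (fun b : ZMod (p ^ r) => 1 ≤ vv b),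
      (univ.filter fun c : ZMod (p ^ r) => 1 ≤ vv c ∧ b * c = x).card * f x := by
    refine sum_congr rfl fun x hx => ?_
    rw [← card_mu hr x (mem_filter.1 hx).2, sum_mul]
  rw [h0]
  conv_rhs => rw [sum_comm]
  refine sum_congr rfl fun b hb => ?_
  rw [← sum_fiberwise_of_maps_to (t := univ.filter (fun b : ZMod (p ^ r) => 1 ≤ vv b)) (g := fun c => b * c)]
  · refine sum_congr rfl fun x hx => ?_
    rw [filter_filter, ← smul_eq_mul, ← sum_const]
    refine sum_congr rfl fun c hc => ?_
    rw [(mem_filter.1 hc).2.2]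
  · intro c hc
    simp only [mem_filter, mem_univ, true_and] at hc ⊢
    rw [← dvd_iff_vv _ _ (by omega)] at *
    exact Dvd.dvd.mul_left hc _

theorem conv_formula (y : ZMod (p ^ r)) (hy : 1 ≤ vv y) (hyr : vv y < r) (F M : ℕ → ℕ) :
    ∑ x ∈ univ.filter (fun b : ZMod (p ^ r) => 1 ≤ vv b), M (vv x) * F (vv (y - x)) =
      (∑ j ∈ Ico 1 (vv y), nF p r j * F j * M j) +
      (∑ j ∈ Icc (vv y + 1) r, nF p r j * F j * M (vv y)) +
      F (vv y) * (M (vv y) * (p - 2) * p ^ (r - vv y - 1) + ∑ j ∈ Icc (vv y + 1) r, nF p r j * M j) := by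
  have e1 : ∑ x ∈ univ.filter (fun b : ZMod (p ^ r) => 1 ≤ vv b), M (vv x) * F (vv (y - x)) =
     ∑ x ∈ univ.filter (fun b : ZMod (p ^ r) => 1 ≤ vv b ∧ vv b < vv y), M (vv x) * F (vv x) +
     ∑ x ∈ univ.filter (fun b : ZMod (p ^ r) => vv y + 1 ≤ vv b), M (vv x) * F (vv y) +
     (∑ x ∈ univ.filter (fun b : ZMod (p ^ r) => vv b = vv y ∧ vv (y - b) = vv y), M (vv y) * F (vv y) +
     ∑ x ∈ univ.filter (fun b : ZMod (p ^ r) => vv y + 1 ≤ vv (y - b)), M (vv y) * F (vv (y - x))) := by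
    simp only [sum_filter, ← sum_add_distrib]
    refine sum_congr rfl fun x _ => ?_
    rcases lt_trichotomy (vv x) (vv y) with h | h | h
    · have := vv_sub_left x y h
      rw [this]
      split_ifs <;> first | omega | simp
    · have := vv_sub_ge x y (vv y) (by omega) le_rfl
      by_cases h' : vv (y - x) = vv y
      · rw [h']
        split_ifs <;> first | omega | simp [h]
      · split_ifs <;> first | omega | simp [h]
    · have := vv_sub_right x y h
      rw [this]
      split_ifs <;> first | omega | simp
  have t1 : ∑ x ∈ univ.filter (fun b : ZMod (p ^ r) => 1 ≤ vv b ∧ vv b < vv y), M (vv x) * F (vv x) =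
      ∑ j ∈ Ico 1 (vv y), nF p r j * F j * M j := by
    rw [← filter_filter, sum_filter, sum_lev 1 fun j => if j < vv y then M j * F j else 0]
    have : Ico 1 (vv y) ⊆ Icc 1 r := by
      intro i; simp only [mem_Ico, mem_Icc]; omega
    rw [← sum_subset this]
    · refine sum_congr rfl fun i hi => ?_
      rw [if_pos (mem_Ico.1 hi).2]; ring
    · intro i hi hi'
      simp only [mem_Ico, mem_Icc] at hi hi'
      rw [if_neg (by omega), mul_zero]
  have t4 : ∑ x ∈ univ.filter (fun b : ZMod (p ^ r) => vv y + 1 ≤ vv (y - b)), M (vv y) * F (vv (y - x)) =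
      ∑ j ∈ Icc (vv y + 1) r, nF p r j * F j * M (vv y) := by
    rw [sum_equiv (Equiv.subLeft y) (t := univ.filter (fun b : ZMod (p ^ r) => vv y + 1 ≤ vv b))
      (g := fun x => M (vv y) * F (vv x)) (by simp) (by simp), sum_lev (vv y + 1) fun j => M (vv y) * F j]
    exact sum_congr rfl fun _ _ => by ring
  have t2 := sum_lev (p := p) (r := r) (vv y + 1) fun j => M j * F (vv y)
  have t3 : (univ.filter (fun b : ZMod (p ^ r) => vv b = vv y ∧ vv (y - b) = vv y)).card = (p - 2) * p ^ (r - vv y - 1) := by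
    have h1 := card_lev (p := p) (r := r) (vv y) hyr.le
    have h2 := card_ge (p := p) (r := r) (vv y + 1) hyr
    have h3 : (univ.filter (fun b : ZMod (p ^ r) => vv y + 1 ≤ vv b)).card =
        (univ.filter (fun b : ZMod (p ^ r) => vv b = vv y ∧ ¬ vv (y - b) = vv y)).card := by
      refine card_nbij' (fun b => y - b) (fun b => y - b) ?_ ?_ ?_ ?_
      · intro b hb
        simp only [coe_filter, mem_univ, true_and, Set.mem_ofPred_eq] at hb ⊢
        rw [sub_sub_cancel, vv_sub_right b y hb]
        omega
      · intro b hb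
        simp only [coe_filter, mem_univ, true_and, Set.mem_ofPred_eq] at hb ⊢
        have := vv_sub_ge b y (vv y) (by omega) le_rfl
        omega
      · intro c _; simp
      · intro c _; simp
    rw [← card_filter_add_card_filter_not (fun b => vv (y - b) = vv y), filter_filter, filter_filter, ← h3, h2, nF, if_neg hyr.ne] at h1
    rw [show r - (vv y + 1) = r - vv y - 1 by omega] at h1
    obtain ⟨s, hs⟩ : ∃ s, r - vv y = s + 1 := ⟨r - vv y - 1, by omega⟩
    rw [hs, Nat.add_sub_cancel, pow_succ] at h1
    rw [hs, Nat.add_sub_cancel]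
    obtain ⟨q, rfl⟩ : ∃ q, p = q + 2 := ⟨p - 2, by have := hp.out.two_le; omega⟩
    rw [Nat.add_sub_cancel]
    have h5 : (q + 2) ^ s * (q + 2) - (q + 2) ^ s = q * (q + 2) ^ s + (q + 2) ^ s := by
      apply Nat.sub_eq_of_eq_add; ring
    rw [h5] at h1
    exact Nat.add_right_cancel h1
  rw [e1, t1, t4, t2, sum_const, t3, smul_eq_mul]
  have t5 : ∑ j ∈ Icc (vv y + 1) r, nF p r j * (M j * F (vv y)) = F (vv y) * ∑ j ∈ Icc (vv y + 1) r, nF p r j * M j := by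
    rw [mul_sum]
    exact sum_congr rfl fun _ _ => by ring
  rw [t5]
  ring

theorem mem_II (hr : 2 ≤ r) (x : ZMod (p ^ r)) : x ∈ Ideal.span {(p : ZMod (p ^ r))} ↔ 1 ≤ vv x := by
  rw [Ideal.mem_span_singleton, ← dvd_iff_vv _ _ (by omega), pow_one]

theorem hII (x : ZMod (p ^ r)) (hx : x ∈ Ideal.span {(p : ZMod (p ^ r))}) : IsUnit (1 + x) :=
  unit_one_add x (Ideal.mem_span_singleton.1 hx)

theorem vv_pow (j : ℕ) (hj : j ≤ r) : vv ((p : ZMod (p ^ r)) ^ j) = j := by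
  apply le_antisymm
  · by_contra h
    have h1 : (p : ZMod (p ^ r)) ^ (j + 1) ∣ (p : ZMod (p ^ r)) ^ j := by
      rw [dvd_iff_vv _ _ (by have := vv_le ((p : ZMod (p ^ r)) ^ j); omega)]; omega
    have hjr : j < r := by have := vv_le ((p : ZMod (p ^ r)) ^ j); omega
    obtain ⟨c, hc⟩ := h1
    have h2 : IsUnit (1 + -((p : ZMod (p ^ r)) * c)) := unit_one_add _ (Dvd.intro _ (by ring : _ * -c = _))
    have h3 : (p : ZMod (p ^ r)) ^ j = 0 := by
      rw [← h2.mul_left_eq_zero]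
      linear_combination hc
    have h4 : ((p ^ j : ℕ) : ZMod (p ^ r)) = 0 := by push_cast; exact h3
    rw [ZMod.natCast_eq_zero_iff] at h4
    have := (Nat.pow_dvd_pow_iff_le_right hp.out.one_lt).1 h4
    omega
  · rw [← dvd_iff_vv _ _ hj]

theorem sigma_GG (hr : 2 ≤ r) [Fintype (Ideal.span {(p : ZMod (p ^ r))})] (k : ℕ) (x : ZMod (p ^ r))
    (hx : 1 ≤ vv x) :
    GG (Ideal.span {(p : ZMod (p ^ r))}) (k + 1) x = sigmaCount p r (2 * (k + 1)) (vv x) := by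
  have hm : (p : ZMod (p ^ r)) ^ vv x ∈ Ideal.span {(p : ZMod (p ^ r))} := by
    rw [mem_II hr, vv_pow _ (vv_le x)]; exact hx
  obtain ⟨u, hu⟩ := exists_unit x
  have h1 : GG (Ideal.span {(p : ZMod (p ^ r))}) (k + 1) x =
      GG (Ideal.span {(p : ZMod (p ^ r))}) (k + 1) ((p : ZMod (p ^ r)) ^ vv x) := by
    conv_lhs => rw [hu]
    exact GG_smul _ hII k _ hm u
  rw [h1, ← GG_smul _ hII k _ hm ((-1) ^ (k + 1)), GG, ← TT_card, sigmaCount]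
  have h2 : ((-1) ^ (k + 1) * (1 + ((((-1) ^ (k + 1) : (ZMod (p ^ r))ˣ)) : ZMod (p ^ r)) * (p : ZMod (p ^ r)) ^ vv x)) =
      (-1) ^ (k + 1) + (p : ZMod (p ^ r)) ^ vv x := by
    push_cast
    rw [mul_add, mul_one, ← mul_assoc, ← mul_pow]; simp
  rw [h2, Nat.mul_div_cancel_left _ (by norm_num)]
  simp only [one_mul]

theorem sum_II (hr : 2 ≤ r) [Fintype (Ideal.span {(p : ZMod (p ^ r))})] (f : ZMod (p ^ r) → ℕ) :
    ∑ x : Ideal.span {(p : ZMod (p ^ r))}, f x =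
      ∑ x ∈ univ.filter (fun b : ZMod (p ^ r) => 1 ≤ vv b), f x := by
  symm
  apply sum_subtype
  intro x
  rw [mem_II hr]; simp

theorem main_rec (hr : 2 ≤ r) (k : ℕ) (y : ZMod (p ^ r)) (hy : 1 ≤ vv y) :
    sigmaCount p r (2 * (k + 2)) (vv y) =
    ∑ x ∈ univ.filter (fun b : ZMod (p ^ r) => 1 ≤ vv b),
      muF p r (vv x) * sigmaCount p r (2 * (k + 1)) (vv (y - x)) := by
  haveI : Fintype (Ideal.span {(p : ZMod (p ^ r))}) := Fintype.ofFinite _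
  rw [← sigma_GG hr (k + 1) y hy, GG_rec _ hII k y ((mem_II hr y).2 hy)]
  rw [sum_II hr fun b : ZMod (p ^ r) => ∑ c : Ideal.span {(p : ZMod (p ^ r))}, GG (Ideal.span {(p : ZMod (p ^ r))}) (k + 1) (y - b * (c : ZMod (p ^ r)))]
  rw [sum_congr rfl fun b _ => sum_II hr fun c : ZMod (p ^ r) => GG (Ideal.span {(p : ZMod (p ^ r))}) (k + 1) (y - b * c)]
  rw [sum_prod hr fun x => GG (Ideal.span {(p : ZMod (p ^ r))}) (k + 1) (y - x)]
  refine sum_congr rfl fun x hx => ?_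
  rw [sigma_GG hr]
  exact vv_sub_ge _ _ _ (mem_filter.1 hx).2 hy

end zmod

/-- The recursion for the numbers `σ_n(ℓ)`. -/
theorem stmt11 (p r : ℕ) (hp : p.Prime) (hr : 2 ≤ r) (n : ℕ) (hn : 4 ≤ n) (hne : Even n) :
    (∀ ℓ, 1 ≤ ℓ → ℓ ≤ r - 1 →
      sigmaCount p r n ℓ =
        (∑ j ∈ Finset.Ico 1 ℓ, nF p r j * sigmaCount p r (n - 2) j * muF p r j) +
        (∑ j ∈ Finset.Icc (ℓ + 1) r, nF p r j * sigmaCount p r (n - 2) j * muF p r ℓ) +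
        sigmaCount p r (n - 2) ℓ *
          (muF p r ℓ * (p - 2) * p ^ (r - ℓ - 1) +
            ∑ j ∈ Finset.Icc (ℓ + 1) r, nF p r j * muF p r j)) ∧
    sigmaCount p r n r =
      ∑ j ∈ Finset.Icc 1 r, nF p r j * sigmaCount p r (n - 2) j * muF p r j := by
  haveI : Fact p.Prime := ⟨hp⟩
  obtain ⟨m, rfl⟩ := hne
  obtain ⟨k, rfl⟩ : ∃ k, m = k + 2 := ⟨m - 2, by omega⟩
  rw [show k + 2 + (k + 2) - 2 = 2 * (k + 1) by omega, ← two_mul]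
  constructor
  · intro ℓ h1 h2
    have hv := vv_pow (p := p) (r := r) ℓ (by omega)
    have h3 := main_rec hr k ((p : ZMod (p ^ r)) ^ ℓ) (by omega)
    rw [conv_formula _ (by omega) (by omega) (fun j => sigmaCount p r (2 * (k + 1)) j) (muF p r), hv] at h3
    exact h3
  · have hv := (vv_eq_r (0 : ZMod (p ^ r))).2 rfl
    have h3 := main_rec hr k (0 : ZMod (p ^ r)) (by omega)
    rw [hv] at h3
    rw [h3, Finset.sum_congr rfl (g := fun x => muF p r (vv x) * sigmaCount p r (2 * (k + 1)) (vv x)),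
      sum_lev 1 fun j => muF p r j * sigmaCount p r (2 * (k + 1)) j]
    · exact Finset.sum_congr rfl fun _ _ => by ring
    · intro x _
      by_cases hx : x = 0
      · simp [hx]
      · rw [vv_sub_left]
        rw [hv]
        exact lt_of_le_of_ne (vv_le x) fun h => hx ((vv_eq_r x).1 h)
end
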